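/- Any Hurwitz-Radon family of real orthogonal N×N matrices has at most ρ(N) - 1 members, where for N = 2^{4d+c}·(odd) with 0 ≤ c < 4 one defines ρ(N) = 2^c + 8d. -/

import Mathlib

open Matrix

/-- The Hurwitz–Radon function: `ρ(N) = 2^c + 8d` where `2^(4d+c)` (with `0 ≤ c < 4`)
is the largest power of 2 dividing `N`. -/
def hrRho (N : ℕ) : ℕ := 2 ^ (padicValNat 2 N % 4) + 8 * (padicValNat 2 N / 4)

/-!
A Hurwitz–Radon family is a representation of the Clifford algebra with `s` anticommuting
generators of square `-1`, so it suffices to show that for `s = ρ(N)` the dimension of every such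
representation is divisible by twice the largest power of `2` dividing `N`.

If an involution `t` anticommutes with an invertible operator, then `t` has trace zero and its
`1`-eigenspace has half the dimension; whatever commutes with `t` acts on that eigenspace. For
generators `a`, `b` of squares `1` and `-1`, the involution `t = a b` commutes with all the other
generators, so such a pair can be removed at the cost of a factor `2`. Four generators of square
`-1` become four of square `1` after multiplication by their product. Hence eight generators of
square `-1` contribute a factor `16`, and only `s = 1, 2, 4` remain: there the determinant, the
quaternions, and the quaternions acting on an eigenspace of half dimension give `2`, `4` and `8`.
-/

open Module

universe u v

/-- Two elements of a ring anticommute: the relation between distinct generators of a Clifford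
algebra. -/
def AntiCommute {R : Type*} [Ring R] (a b : R) : Prop :=
  a * b = -(b * a)

namespace AntiCommute

variable {R : Type*} [Ring R] {a b x : R}

theorem symm (h : AntiCommute a b) : AntiCommute b a := by
  rw [AntiCommute, h, neg_neg]

theorem commute_mul (ha : AntiCommute x a) (hb : AntiCommute x b) : Commute x (a * b) := by
  rw [Commute, SemiconjBy, ← mul_assoc, ha, neg_mul, mul_assoc, hb, mul_neg, neg_neg, mul_assoc]

theorem mul_of_commute (ha : AntiCommute x a) (hb : Commute x b) : AntiCommute x (a * b) := by
  rw [AntiCommute, ← mul_assoc, ha, neg_mul, mul_assoc, hb.eq, mul_assoc]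

theorem commute_mul_antiCommute (ha : Commute x a) (hb : AntiCommute x b) :
    AntiCommute x (a * b) := by
  rw [AntiCommute, ← mul_assoc, ha.eq, mul_assoc, hb, mul_neg, mul_assoc]

theorem antiCommute_mul_left (h : AntiCommute a b) : AntiCommute a (a * b) :=
  commute_mul_antiCommute (.refl a) h

theorem antiCommute_mul_right (h : AntiCommute a b) : AntiCommute b (a * b) :=
  h.symm.mul_of_commute (.refl b)

theorem mul_mul_mul_self (h : AntiCommute a b) : a * b * (a * b) = -(a * a * (b * b)) := by
  rw [mul_assoc, ← mul_assoc b, h.symm, neg_mul, mul_neg, mul_assoc a b b, mul_assoc]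

theorem map {S F : Type*} [Ring S] [FunLike F R S] [RingHomClass F R S] (f : F)
    (h : AntiCommute a b) : AntiCommute (f a) (f b) := by
  rw [AntiCommute, ← map_mul, h, map_neg, map_mul]

end AntiCommute

/-- A family of generators of a Clifford algebra: the elements `e i` anticommute pairwise and
`e i` has square `w i`. Integer weights `w` let one definition serve every ring. -/
structure IsCliffordFamily {ι R : Type*} [Ring R] (w : ι → ℤ) (e : ι → R) : Prop where
  mul_self (i : ι) : e i * e i = w i
  antiCommute : Pairwise fun i j => AntiCommute (e i) (e j)

/-- The weights of a Clifford algebra of signature `(p, q)`: `p` generators of square `1` and `q`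
generators of square `-1`. -/
def signature (p q : ℕ) : Fin p ⊕ Fin q → ℤ :=
  Sum.elim 1 (-1)

/-- The product of four generators of a Clifford algebra. -/
def volumeElement {R : Type*} [Ring R] (a : Fin 4 → R) : R :=
  a 0 * a 1 * (a 2 * a 3)

theorem commute_volumeElement {R : Type*} [Ring R] {a : Fin 4 → R} {x : R}
    (h : ∀ i, AntiCommute x (a i)) : Commute x (volumeElement a) :=
  ((h 0).commute_mul (h 1)).mul_right ((h 2).commute_mul (h 3))

namespace IsCliffordFamily

section Ring

variable {ι κ R : Type*} [Ring R] {w : ι → ℤ} {e : ι → R}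

theorem comp_injective (h : IsCliffordFamily w e) {f : κ → ι} (hf : f.Injective) :
    IsCliffordFamily (w ∘ f) (e ∘ f) where
  mul_self i := h.mul_self (f i)
  antiCommute _ _ hij := h.antiCommute (hf.ne hij)

theorem map {S F : Type*} [Ring S] [FunLike F R S] [RingHomClass F R S]
    (h : IsCliffordFamily w e) (f : F) : IsCliffordFamily w (f ∘ e) where
  mul_self i := by simp only [Function.comp_apply, ← map_mul, h.mul_self, map_intCast]
  antiCommute _ _ hij := (h.antiCommute hij).map f

theorem mul_self_eq_neg_one (h : IsCliffordFamily w e) {i : ι} (hi : w i = -1) :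
    e i * e i = -1 := by
  rw [h.mul_self, hi, Int.cast_neg, Int.cast_one]

theorem isUnit (h : IsCliffordFamily w e) {i : ι} (hi : w i = -1) : IsUnit (e i) := by
  refine (isUnit_pow_iff two_ne_zero).1 ?_
  rw [sq, h.mul_self_eq_neg_one hi]
  exact isUnit_one.neg

theorem pair_mul_self (h : IsCliffordFamily w e) {i j : ι} (hij : i ≠ j) :
    e i * e j * (e i * e j) = ((-(w i * w j) : ℤ) : R) := by
  rw [(h.antiCommute hij).mul_mul_mul_self, h.mul_self, h.mul_self]
  push_cast
  rfl

theorem commute_mul (h : IsCliffordFamily w e) {i j k : ι} (hi : k ≠ i) (hj : k ≠ j) :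
    Commute (e k) (e i * e j) :=
  (h.antiCommute hi).commute_mul (h.antiCommute hj)

theorem triple_mul_self (h : IsCliffordFamily w e) {i j k : ι} (hij : i ≠ j) (hik : i ≠ k)
    (hjk : j ≠ k) : e i * e j * e k * (e i * e j * e k) = ((-(w i * w j * w k) : ℤ) : R) := by
  rw [(h.commute_mul hik.symm hjk.symm).mul_mul_mul_comm, h.pair_mul_self hij, h.mul_self]
  push_cast
  exact neg_mul _ _

theorem volumeElement_mul_self {w : Fin 4 → ℤ} {a : Fin 4 → R} (h : IsCliffordFamily w a) :
    volumeElement a * volumeElement a = ((w 0 * w 1 * (w 2 * w 3) : ℤ) : R) := by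
  have hcomm : Commute (a 2 * a 3) (a 0 * a 1) :=
    (h.commute_mul (by decide) (by decide)).mul_left (h.commute_mul (by decide) (by decide))
  rw [volumeElement, hcomm.mul_mul_mul_comm, h.pair_mul_self (by decide),
    h.pair_mul_self (by decide)]
  push_cast
  exact neg_mul_neg _ _

theorem antiCommute_volumeElement {w : Fin 4 → ℤ} {a : Fin 4 → R} (h : IsCliffordFamily w a)
    (i : Fin 4) : AntiCommute (a i) (volumeElement a) := by
  have h01 : AntiCommute (a 0) (a 1) := h.antiCommute (by decide)
  have h23 : AntiCommute (a 2) (a 3) := h.antiCommute (by decide)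
  fin_cases i
  · exact h01.antiCommute_mul_left.mul_of_commute (h.commute_mul (by decide) (by decide))
  · exact h01.antiCommute_mul_right.mul_of_commute (h.commute_mul (by decide) (by decide))
  · exact .commute_mul_antiCommute (h.commute_mul (by decide) (by decide))
      h23.antiCommute_mul_left
  · exact .commute_mul_antiCommute (h.commute_mul (by decide) (by decide))
      h23.antiCommute_mul_right

theorem sumElim_involution_mul {v : κ → ℤ} {a : κ → R} {b : ι → R} {t : R}
    (h : IsCliffordFamily (Sum.elim v w) (Sum.elim a b)) (ht : t * t = 1)
    (ha : ∀ i, AntiCommute (a i) t) (hb : ∀ j, Commute (b j) t) :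
    IsCliffordFamily (Sum.elim (-v) w) (Sum.elim (fun i => t * a i) b) where
  mul_self := by
    rintro (i | j)
    · have hi : a i * a i = v i := h.mul_self (.inl i)
      simp [(ha i).symm.mul_mul_mul_self, ht, hi]
    · exact h.mul_self (.inr j)
  antiCommute := by
    have mixed (i : κ) (j : ι) : AntiCommute (b j) (t * a i) :=
      .commute_mul_antiCommute (hb j) (h.antiCommute (i := .inr j) (j := .inl i) (by simp))
    have mul_mul_mul (i j : κ) : t * a i * (t * a j) = -(a i * a j) := by
      rw [mul_assoc, ← mul_assoc (a i), ha i, neg_mul, mul_neg, ← mul_assoc, ← mul_assoc, ht,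
        one_mul]
    rintro (i | i) (j | j) hij
    · have hij' : a i * a j = -(a j * a i) := h.antiCommute hij
      simp only [AntiCommute, Sum.elim_inl, mul_mul_mul, hij']
    · exact (mixed i j).symm
    · exact mixed j i
    · exact h.antiCommute hij

end Ring

theorem restrict {ι K V : Type*} [Ring K] [AddCommGroup V] [Module K V] {w : ι → ℤ}
    {e : ι → End K V} (h : IsCliffordFamily w e) {W : Submodule K V}
    (hW : ∀ i, ∀ x ∈ W, e i x ∈ W) : IsCliffordFamily w fun i => (e i).restrict (hW i) where
  mul_self i := by
    ext x
    simpa using LinearMap.congr_fun (h.mul_self i) x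
  antiCommute i j hij := by
    ext x
    simpa using LinearMap.congr_fun (h.antiCommute hij) x

end IsCliffordFamily

section Dimension

variable {K : Type*} [Field K] {V : Type*} [AddCommGroup V] [Module K V]

theorem trace_eq_zero_of_antiCommute [NeZero (2 : K)] {t q : End K V} (hq : IsUnit q)
    (h : AntiCommute q t) : LinearMap.trace K V t = 0 := by
  obtain ⟨q, rfl⟩ := hq
  have hconj : (q : End K V) * t * ((q⁻¹ : (End K V)ˣ) : End K V) = -t := by
    rw [h, neg_mul, mul_assoc, Units.mul_inv, mul_one]
  have htrace := LinearMap.trace_conj (R := K) t q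
  rw [hconj, map_neg, neg_eq_iff_add_eq_zero, ← two_mul] at htrace
  exact (mul_eq_zero_iff_left two_ne_zero).1 htrace

theorem isProj_eigenspace_one_of_mul_self [NeZero (2 : K)] {t : End K V} (ht : t * t = 1) :
    LinearMap.IsProj (t.eigenspace 1) ((2⁻¹ : K) • (1 + t)) where
  map_mem x := by
    have htt : t (t x) = x := LinearMap.congr_fun ht x
    simp [htt, add_comm]
  map_id x hx := by
    rw [End.mem_eigenspace_iff, one_smul] at hx
    simp [hx, ← two_smul K x, smul_smul, two_ne_zero, -smul_add]

theorem finrank_eq_two_mul_finrank_eigenspace [CharZero K] [FiniteDimensional K V]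
    {t q : End K V} (ht : t * t = 1) (hq : IsUnit q) (h : AntiCommute q t) :
    finrank K V = 2 * finrank K (t.eigenspace 1) := by
  have htrace := (isProj_eigenspace_one_of_mul_self ht).trace
  rw [map_smul, map_add, LinearMap.trace_one, trace_eq_zero_of_antiCommute hq h, add_zero,
    smul_eq_mul, inv_mul_eq_iff_eq_mul₀ two_ne_zero] at htrace
  exact_mod_cast htrace

variable [LinearOrder K] [IsStrictOrderedRing K]

theorem even_finrank_of_mul_self_eq_neg_one {a : End K V} (ha : a * a = -1) :
    Even (finrank K V) := by
  have hdet : LinearMap.det a * LinearMap.det a = (-1) ^ finrank K V := by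
    rw [← map_mul, ha, ← neg_one_smul K 1, LinearMap.det_smul, map_one, mul_one]
  by_contra hodd
  rw [(Nat.not_even_iff_odd.1 hodd).neg_one_pow] at hdet
  linarith [mul_self_nonneg (LinearMap.det a)]

-- The quaternions over an ordered field form a division ring, so `V` is free over them.
theorem four_dvd_finrank_of_antiCommute {a b : End K V} (ha : a * a = -1) (hb : b * b = -1)
    (hab : AntiCommute a b) : 4 ∣ finrank K V := by
  let basis : QuaternionAlgebra.Basis (End K V) (-1 : K) 0 (-1) :=
    { i := a
      j := b
      k := a * b
      i_mul_i := by simp [ha]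
      j_mul_j := by simp [hb]
      i_mul_j := rfl
      j_mul_i := by rw [zero_smul, zero_sub]; exact hab.symm }
  let action : Quaternion K →ₐ[K] End K V := QuaternionAlgebra.lift basis
  let : Module (Quaternion K) V := Module.compHom V action.toRingHom
  have : IsScalarTower K (Quaternion K) V := ⟨fun r c x =>
    LinearMap.congr_fun (map_smul action r c) x⟩
  rw [← Quaternion.finrank_eq_four (R := K)]
  exact finrank_dvd_finrank_right K (Quaternion K) V

end Dimension

/-- Every finite-dimensional representation over `K` of the Clifford algebra of signature `(p, q)`
has dimension divisible by `m`. -/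
def CliffordDimDvd (K : Type u) [Field K] (p q m : ℕ) : Prop :=
  ∀ (V : Type v) [AddCommGroup V] [Module K V] [FiniteDimensional K V]
    (e : Fin p ⊕ Fin q → End K V), IsCliffordFamily (signature p q) e → m ∣ finrank K V

namespace CliffordDimDvd

section Field

variable {K : Type u} [Field K] {p q m : ℕ}

theorem dvd_finrank {V : Type v} [AddCommGroup V] [Module K V] [FiniteDimensional K V]
    {ι : Type*} {w : ι → ℤ} {e : ι → End K V} (hm : CliffordDimDvd.{u, v} K p q m)
    (h : IsCliffordFamily w e) (f : Fin p ⊕ Fin q ↪ ι) (hf : w ∘ f = signature p q) :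
    m ∣ finrank K V :=
  hm V (e ∘ f) (hf ▸ h.comp_injective f.injective)

theorem two_mul_dvd_finrank [CharZero K] {V : Type v} [AddCommGroup V] [Module K V]
    [FiniteDimensional K V] (hm : CliffordDimDvd.{u, v} K p q m) {e : Fin p ⊕ Fin q → End K V}
    (h : IsCliffordFamily (signature p q) e) {t x : End K V} (ht : t * t = 1) (hx : IsUnit x)
    (hxt : AntiCommute x t) (hcomm : ∀ i, Commute (e i) t) : 2 * m ∣ finrank K V := by
  have invariant (i) : ∀ y ∈ t.eigenspace 1, e i y ∈ t.eigenspace 1 := fun _ hy =>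
    End.mapsTo_genEigenspace_of_comm (hcomm i).symm 1 1 hy
  rw [finrank_eq_two_mul_finrank_eigenspace ht hx hxt]
  exact mul_dvd_mul_left 2 (hm _ _ (h.restrict invariant))

theorem succ_succ [CharZero K] (hm : CliffordDimDvd.{u, v} K p q m) :
    CliffordDimDvd.{u, v} K (p + 1) (q + 1) (2 * m) := by
  intro V _ _ _ e h
  have ht : e (.inl 0) * e (.inr 0) * (e (.inl 0) * e (.inr 0)) = 1 := by
    simp [h.pair_mul_self (i := .inl 0) (j := .inr 0) (by simp), signature]
  have h' : IsCliffordFamily (signature p q) (e ∘ Sum.map Fin.succ Fin.succ) := by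
    convert h.comp_injective ((Fin.succ_injective p).sumMap (Fin.succ_injective q)) using 1
    ext (i | j) <;> rfl
  refine hm.two_mul_dvd_finrank h' ht (h.isUnit (i := .inr 0) rfl)
    (h.antiCommute (by simp)).antiCommute_mul_right ?_
  rintro (i | j)
  · exact h.commute_mul (by simp [Fin.succ_ne_zero]) (by simp)
  · exact h.commute_mul (by simp) (by simp [Fin.succ_ne_zero])

theorem add_four_right (hm : CliffordDimDvd.{u, v} K (p + 4) q m) :
    CliffordDimDvd.{u, v} K p (q + 4) m := by
  intro V _ _ _ e h
  let split : Fin 4 ⊕ (Fin p ⊕ Fin q) ≃ Fin p ⊕ Fin (q + 4) :=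
    (Equiv.sumComm _ _).trans ((Equiv.sumAssoc _ _ _).trans
      ((Equiv.refl _).sumCongr finSumFinEquiv))
  let merge : Fin 4 ⊕ (Fin p ⊕ Fin q) ≃ Fin (p + 4) ⊕ Fin q :=
    (Equiv.sumAssoc _ _ _).symm.trans
      (((Equiv.sumComm _ _).trans finSumFinEquiv).sumCongr (Equiv.refl _))
  let a : Fin 4 → End K V := e ∘ split ∘ Sum.inl
  let b : Fin p ⊕ Fin q → End K V := e ∘ split ∘ Sum.inr
  have hsplit : IsCliffordFamily (Sum.elim (-1) (signature p q)) (Sum.elim a b) := by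
    convert h.comp_injective split.injective using 1
    · ext (i | i | i) <;> rfl
    · ext (i | i) <;> rfl
  have ha : IsCliffordFamily (-1) a := hsplit.comp_injective Sum.inl_injective
  have htwist := hsplit.sumElim_involution_mul (t := volumeElement a)
    (by simp [ha.volumeElement_mul_self]) ha.antiCommute_volumeElement
    fun j => commute_volumeElement fun i => hsplit.antiCommute Sum.inr_ne_inl
  refine hm.dvd_finrank htwist merge.symm.toEmbedding ?_
  rw [Equiv.coe_toEmbedding, Equiv.comp_symm_eq]
  ext (i | i | i) <;> rfl

theorem add_eight_right [CharZero K] (hm : CliffordDimDvd.{u, v} K p q m) :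
    CliffordDimDvd.{u, v} K p (q + 8) (16 * m) := by
  have h16 : CliffordDimDvd.{u, v} K p (q + 8) (2 * (2 * (2 * (2 * m)))) :=
    hm.succ_succ.succ_succ.succ_succ.succ_succ.add_four_right
  convert h16 using 1
  ring

theorem add_eight_mul_right [CharZero K] (hm : CliffordDimDvd.{u, v} K p q m) (d : ℕ) :
    CliffordDimDvd.{u, v} K p (q + 8 * d) (16 ^ d * m) := by
  induction d with
  | zero => simpa using hm
  | succ d ih => simpa only [mul_add, mul_one, ← add_assoc, pow_succ', mul_assoc] using
      ih.add_eight_right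

end Field

section OrderedField

variable (K : Type u) [Field K]

theorem zero_zero : CliffordDimDvd.{u, v} K 0 0 1 := fun _ _ _ _ _ _ => one_dvd _

variable [LinearOrder K] [IsStrictOrderedRing K]

theorem zero_one : CliffordDimDvd.{u, v} K 0 1 2 := fun _ _ _ _ _ h =>
  (even_finrank_of_mul_self_eq_neg_one (h.mul_self_eq_neg_one (i := .inr 0) rfl)).two_dvd

theorem zero_two : CliffordDimDvd.{u, v} K 0 2 4 := fun _ _ _ _ _ h =>
  four_dvd_finrank_of_antiCommute (h.mul_self_eq_neg_one (i := .inr 0) rfl)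
    (h.mul_self_eq_neg_one (i := .inr 1) rfl) (h.antiCommute (by simp))

theorem zero_four : CliffordDimDvd.{u, v} K 0 4 8 := by
  intro V _ _ _ e h
  let c : Fin 4 → End K V := e ∘ Sum.inr
  have hc : IsCliffordFamily (-1) c := h.comp_injective Sum.inr_injective
  have ht : c 0 * c 1 * c 2 * (c 0 * c 1 * c 2) = 1 := by
    simp [hc.triple_mul_self (i := 0) (j := 1) (k := 2)]
  have h' : IsCliffordFamily (signature 0 2) (e ∘ Sum.map id (Fin.castAdd 2)) := by
    convert h.comp_injective (Function.injective_id.sumMap (Fin.castAdd_injective 2 2)) using 1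
    ext (i | j) <;> rfl
  have h01 : AntiCommute (c 0) (c 1) := hc.antiCommute (by decide)
  have h3t : AntiCommute (c 3) (c 0 * c 1 * c 2) :=
    .commute_mul_antiCommute (hc.commute_mul (by decide) (by decide))
      (hc.antiCommute (by decide))
  refine (zero_two K).two_mul_dvd_finrank h' ht (hc.isUnit (i := 3) rfl) h3t ?_
  rintro (i | i)
  · exact i.elim0
  · fin_cases i
    · exact h01.antiCommute_mul_left.commute_mul (hc.antiCommute (by decide))
    · exact h01.antiCommute_mul_right.commute_mul (hc.antiCommute (by decide))

theorem two_pow {c : ℕ} (hc : c < 4) : CliffordDimDvd.{u, v} K 0 (2 ^ c) (2 ^ (c + 1)) := by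
  interval_cases c
  · exact zero_one K
  · exact zero_two K
  · exact zero_four K
  · exact (zero_zero K).add_eight_right

theorem hrRho_padicValNat (N : ℕ) :
    CliffordDimDvd.{u, v} K 0 (hrRho N) (2 ^ (padicValNat 2 N + 1)) := by
  have hdvd := (two_pow.{u, v} K (Nat.mod_lt (padicValNat 2 N) four_pos)).add_eight_mul_right
    (padicValNat 2 N / 4)
  rwa [show 16 = 2 ^ 4 by norm_num, ← pow_mul, ← pow_add, ← add_assoc, Nat.div_add_mod] at hdvd

end OrderedField

end CliffordDimDvd

theorem isCliffordFamily_of_orthogonal_of_skew {ι n R : Type*} [Fintype n]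
    [DecidableEq n] [Ring R] {A : ι → Matrix n n R} (horth : ∀ j, A j * (A j)ᵀ = 1)
    (hskew : ∀ j, (A j)ᵀ = -A j) (hanti : ∀ j k, j ≠ k → A j * A k = -(A k * A j)) :
    IsCliffordFamily (-1) A where
  mul_self j := by simpa [hskew, neg_eq_iff_eq_neg] using horth j
  antiCommute j k hjk := hanti j k hjk

theorem stmt_16_general {K V : Type*} [Field K] [LinearOrder K] [IsStrictOrderedRing K]
    [AddCommGroup V] [Module K V] [FiniteDimensional K V] [Nontrivial V] {s : ℕ}
    {e : Fin s → End K V} (h : IsCliffordFamily (-1) e) : s ≤ hrRho (finrank K V) - 1 := by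
  by_contra! hs
  have hle : hrRho (finrank K V) ≤ s := by omega
  let f : Fin 0 ⊕ Fin (hrRho (finrank K V)) ↪ Fin s :=
    (Equiv.emptySum (Fin 0) _).toEmbedding.trans (Fin.castLEEmb hle)
  have hf : (-1 : Fin s → ℤ) ∘ f = signature 0 (hrRho (finrank K V)) := by
    ext (i | j)
    exacts [i.elim0, rfl]
  have hdvd : 2 ^ (padicValNat 2 (finrank K V) + 1) ∣ finrank K V :=
    (CliffordDimDvd.hrRho_padicValNat K _).dvd_finrank h f hf
  exact pow_succ_padicValNat_not_dvd finrank_pos.ne' hdvd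

/-- Radon's theorem: any Hurwitz–Radon family of real orthogonal `N×N` matrices
(skew-symmetric, pairwise anticommuting) has at most `ρ(N) - 1` members. -/
theorem stmt_16 {N s : ℕ} (hN : 0 < N) (A : Fin s → Matrix (Fin N) (Fin N) ℝ)
    (horth : ∀ j, A j * (A j)ᵀ = 1)
    (hskew : ∀ j, (A j)ᵀ = -(A j))
    (hanti : ∀ j k, j ≠ k → A j * A k = -(A k * A j)) :
    s ≤ hrRho N - 1 := by
  have : NeZero N := ⟨hN.ne'⟩
  simpa using stmt_16_general
    ((isCliffordFamily_of_orthogonal_of_skew horth hskew hanti).map (toLinAlgEquiv' (R := ℝ)))
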